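/- arXiv:2210.09447 — 7 statements merged into one kernel-verified Lean document; each statement's English description precedes it below -/
import Mathlib

section
/- For any monomial a in r variables, the divisor-counting function h, defined by h(i) = the number of monomials of degree i dividing a, is log-concave: h(i-1)·h(i+1) ≤ h(i)^2 for all i ≥ 1. (In other words, all pure O-sequences of type 1 are log-concave, in any codimension.) -/
/-- `divCount a i` is the number of monomials of degree `i` dividing the
monomial (in `r` variables) with exponent vector `a`. -/
noncomputable def divCount {r : ℕ} (a : Fin r → ℕ) (i : ℕ) : ℕ :=
  {b : Fin r → ℕ | (∀ j, b j ≤ a j) ∧ ∑ j, b j = i}.ncard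

/-- Strong log-concavity of an integer-indexed sequence: moving two indices towards each other
does not decrease the product. -/
def StronglyLogConcave (f : ℤ → ℤ) : Prop :=
  ∀ x y, x ≤ y → f (x - 1) * f (y + 1) ≤ f x * f y

theorem StronglyLogConcave.mul_le_mul_of_shift {f : ℤ → ℤ} (hf : StronglyLogConcave f) (k : ℕ) :
    ∀ x y, x ≤ y → f (x - k) * f (y + k) ≤ f x * f y := by
  induction k with
  | zero => intro x y _; simp
  | succ k ih =>
    intro x y hxy
    refine le_trans ?_ (ih x y hxy)
    have h := hf (x - k) (y + k) (by omega)
    push_cast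
    rwa [← sub_sub, ← add_assoc]

theorem StronglyLogConcave.mul_le_mul_of_add_eq {f : ℤ → ℤ} (hf : StronglyLogConcave f)
    {a b c d : ℤ} (hab : a ≤ b) (hac : a ≤ c) (h : a + d = b + c) :
    f a * f d ≤ f b * f c := by
  wlog hbc : b ≤ c generalizing b c
  · rw [mul_comm (f b)]
    exact this hac hab (by omega) (by omega)
  obtain ⟨k, hk⟩ := Int.eq_ofNat_of_zero_le (sub_nonneg.2 hab)
  have key := hf.mul_le_mul_of_shift k b c hbc
  rwa [show b - k = a by omega, show c + k = d by omega] at key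

/-- Sums over a sliding window of fixed length preserve strong log-concavity. -/
theorem StronglyLogConcave.window_sum {f : ℤ → ℤ} (hf : StronglyLogConcave f) (n : ℕ) :
    StronglyLogConcave fun k => ∑ t ∈ Finset.range (n + 1), f (k - t) := by
  intro x y hxy
  have step : ∀ k : ℤ, ∑ t ∈ Finset.range (n + 1), f (k - t) + f (k - 1 - n) =
      ∑ t ∈ Finset.range (n + 1), f (k - 1 - t) + f k := by
    intro k
    rw [Finset.sum_range_succ', Finset.sum_range_succ (fun t : ℕ => f (k - 1 - t))]
    simp only [Nat.cast_add, Nat.cast_one, Nat.cast_zero, sub_zero, sub_sub, add_comm (1 : ℤ)]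
    ring
  have hx := step x
  have hy := step (y + 1)
  simp only [add_sub_cancel_right] at hy
  have upper : (∑ t ∈ Finset.range (n + 1), f (x - 1 - t)) * f (y + 1) ≤
      (∑ t ∈ Finset.range (n + 1), f (y - t)) * f x := by
    rw [Finset.sum_mul, Finset.sum_mul]
    refine Finset.sum_le_sum fun t _ => ?_
    exact hf.mul_le_mul_of_add_eq (by omega) (by omega) (by omega)
  have lower : f (x - 1 - n) * (∑ t ∈ Finset.range (n + 1), f (y - t)) ≤
      f (y - n) * (∑ t ∈ Finset.range (n + 1), f (x - 1 - t)) := by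
    rw [Finset.mul_sum, Finset.mul_sum]
    refine Finset.sum_le_sum fun t ht => ?_
    have := Finset.mem_range.1 ht
    exact hf.mul_le_mul_of_add_eq (by omega) (by omega) (by omega)
  dsimp only
  rw [eq_sub_of_add_eq hx, eq_sub_of_add_eq hy]
  linarith

/-- The finset of divisors of degree `k` of the monomial with exponent vector `a`,
with the degree allowed to be any integer. -/
def divisorsOfDegree {r : ℕ} (a : Fin r → ℕ) (k : ℤ) : Finset (Fin r → ℕ) :=
  {b ∈ Fintype.piFinset fun j => Finset.range (a j + 1) | ∑ j, (b j : ℤ) = k}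

theorem mem_divisorsOfDegree {r : ℕ} {a b : Fin r → ℕ} {k : ℤ} :
    b ∈ divisorsOfDegree a k ↔ (∀ j, b j ≤ a j) ∧ ∑ j, (b j : ℤ) = k := by
  simp [divisorsOfDegree]

theorem divCount_eq_card {r : ℕ} (a : Fin r → ℕ) (i : ℕ) :
    divCount a i = (divisorsOfDegree a i).card := by
  rw [divCount, ← Set.ncard_coe_finset]
  congr 1
  ext b
  rw [Finset.mem_coe, mem_divisorsOfDegree, Set.mem_ofPred_eq]
  norm_cast

theorem card_divisorsOfDegree_succ {r : ℕ} (a : Fin (r + 1) → ℕ) (k : ℤ) :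
    (divisorsOfDegree a k).card =
      ∑ t ∈ Finset.range (a 0 + 1), (divisorsOfDegree (Fin.tail a) (k - t)).card := by
  rw [Finset.card_eq_sum_card_fiberwise (f := fun b => b 0) (t := Finset.range (a 0 + 1))]
  · refine Finset.sum_congr rfl fun t ht => ?_
    have ht' := Finset.mem_range.1 ht
    refine Finset.card_nbij' (fun b => Fin.tail b) (fun b => Fin.cons t b) ?_ ?_ ?_ ?_
    · intro b hb
      simp only [Finset.coe_filter, Set.mem_ofPred_eq, mem_divisorsOfDegree,
        Fin.sum_univ_succ] at hb
      obtain ⟨⟨hle, hsum⟩, rfl⟩ := hb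
      exact mem_divisorsOfDegree.2 ⟨fun j => hle j.succ, by simp only [Fin.tail]; omega⟩
    · intro b hb
      obtain ⟨hle, hsum⟩ := mem_divisorsOfDegree.1 hb
      simp only [Finset.coe_filter, Set.mem_ofPred_eq, mem_divisorsOfDegree,
        Fin.sum_univ_succ, Fin.forall_fin_succ, Fin.cons_zero, Fin.cons_succ]
      exact ⟨⟨⟨by omega, hle⟩, by omega⟩, trivial⟩
    · intro b hb
      obtain ⟨-, rfl⟩ := Finset.mem_filter.1 hb
      exact Fin.cons_self_tail b
    · intro b _
      rfl
  · intro b hb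
    have := (mem_divisorsOfDegree.1 hb).1 0
    simp only [Finset.coe_range, Set.mem_Iio]
    omega

theorem stronglyLogConcave_card_divisorsOfDegree {r : ℕ} (a : Fin r → ℕ) :
    StronglyLogConcave fun k => ((divisorsOfDegree a k).card : ℤ) := by
  induction r with
  | zero =>
    have vanish : ∀ k : ℤ, k ≠ 0 → (divisorsOfDegree a k).card = 0 := by
      intro k hk
      simp [divisorsOfDegree, hk.symm]
    intro x y hxy
    have : (divisorsOfDegree a (x - 1)).card = 0 ∨ (divisorsOfDegree a (y + 1)).card = 0 := by
      by_cases hx : x - 1 = 0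
      · exact Or.inr (vanish _ (by omega))
      · exact Or.inl (vanish _ hx)
    rcases this with h | h <;> simp only [h, Nat.cast_zero, zero_mul, mul_zero] <;> positivity
  | succ r ih =>
    simp only [card_divisorsOfDegree_succ, Nat.cast_sum]
    exact (ih (Fin.tail a)).window_sum (a 0)

/-- **All pure `O`-sequences of type 1 are log-concave, in any codimension.**
For any monomial in `r` variables, its divisor-counting function is log-concave. -/
theorem stmt_1 {r : ℕ} (a : Fin r → ℕ) (i : ℕ) (hi : 1 ≤ i) :
    divCount a (i - 1) * divCount a (i + 1) ≤ (divCount a i) ^ 2 := by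
  have h := stronglyLogConcave_card_divisorsOfDegree a i i le_rfl
  rw [divCount_eq_card, divCount_eq_card, divCount_eq_card, sq]
  push_cast [hi]
  dsimp only at h
  exact_mod_cast h
end

section
/- Let p and q be real polynomials such that every coefficient of p in degrees 0 through deg p is strictly positive, every coefficient of q in degrees 0 through deg q is strictly positive, and the coefficient sequences of p and q are both log-concave. Then every coefficient of p·q in degrees 0 through deg(p·q) is strictly positive and the coefficient sequence of p·q is log-concave. -/
open Polynomial Finset

/-- A polynomial with positive coefficients up to its degree has nonnegative coefficients. -/
theorem Polynomial.coeff_nonneg_of_pos_le_natDegree {p : ℝ[X]}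
    (hpos : ∀ i ≤ p.natDegree, 0 < p.coeff i) (i : ℕ) : 0 ≤ p.coeff i := by
  rcases le_or_gt i p.natDegree with h | h
  · exact (hpos i h).le
  · exact (coeff_eq_zero_of_natDegree_lt h).ge

/-- Log-concavity compares products of coefficients at distant indices. -/
theorem Polynomial.coeff_mul_coeff_succ_le_of_logConcave {p : ℝ[X]}
    (hpos : ∀ i ≤ p.natDegree, 0 < p.coeff i)
    (hlc : ∀ i, 1 ≤ i → p.coeff (i - 1) * p.coeff (i + 1) ≤ (p.coeff i) ^ 2)
    {i j : ℕ} (hij : i ≤ j) :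
    p.coeff i * p.coeff (j + 1) ≤ p.coeff (i + 1) * p.coeff j := by
  have hnonneg := coeff_nonneg_of_pos_le_natDegree hpos
  induction j, hij using Nat.le_induction with
  | base => exact (mul_comm _ _).le
  | succ j hij ih =>
    rcases le_or_gt (j + 1 + 1) p.natDegree with hdeg | hdeg
    · have hj : 0 < p.coeff j := hpos j (by omega)
      have hstep := hlc (j + 1) (by omega)
      rw [Nat.add_sub_cancel] at hstep
      refine le_of_mul_le_mul_left ?_ hj
      calc p.coeff j * (p.coeff i * p.coeff (j + 1 + 1))
          = p.coeff i * (p.coeff j * p.coeff (j + 1 + 1)) := by ring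
        _ ≤ p.coeff i * p.coeff (j + 1) ^ 2 := mul_le_mul_of_nonneg_left hstep (hnonneg i)
        _ = p.coeff i * p.coeff (j + 1) * p.coeff (j + 1) := by ring
        _ ≤ p.coeff (i + 1) * p.coeff j * p.coeff (j + 1) :=
          mul_le_mul_of_nonneg_right ih (hnonneg _)
        _ = p.coeff j * (p.coeff (i + 1) * p.coeff (j + 1)) := by ring
    · rw [coeff_eq_zero_of_natDegree_lt hdeg, mul_zero]
      exact mul_nonneg (hnonneg _) (hnonneg _)

/-- The two-by-two minors of the coefficient sequences of `p` and `X * p` have constant sign. -/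
theorem Polynomial.coeff_X_mul_mul_coeff_le_of_logConcave {p : ℝ[X]}
    (hpos : ∀ i ≤ p.natDegree, 0 < p.coeff i)
    (hlc : ∀ i, 1 ≤ i → p.coeff (i - 1) * p.coeff (i + 1) ≤ (p.coeff i) ^ 2)
    {i j : ℕ} (hij : i ≤ j) :
    (X * p).coeff i * p.coeff j ≤ p.coeff i * (X * p).coeff j := by
  have hnonneg := coeff_nonneg_of_pos_le_natDegree hpos
  cases i with
  | zero =>
    rw [coeff_X_mul_zero, zero_mul]
    refine mul_nonneg (hnonneg _) ?_
    cases j with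
    | zero => rw [coeff_X_mul_zero]
    | succ j => rw [coeff_X_mul]; exact hnonneg j
  | succ i =>
    obtain ⟨j, rfl⟩ : ∃ k, j = k + 1 := ⟨j - 1, by omega⟩
    rw [coeff_X_mul, coeff_X_mul]
    exact coeff_mul_coeff_succ_le_of_logConcave hpos hlc (by omega)

/-- A symmetrized Cauchy–Binet identity. -/
theorem Finset.sum_sum_minor_mul_minor {ι R : Type*} [CommRing R] (s : Finset ι)
    (a b c d : ι → R) :
    ∑ x ∈ s, ∑ y ∈ s, (a x * b y - b x * a y) * (c x * d y - d x * c y) =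
      2 * ((∑ x ∈ s, a x * c x) * (∑ x ∈ s, b x * d x) -
        (∑ x ∈ s, b x * c x) * (∑ x ∈ s, a x * d x)) := by
  have expand : ∀ x y, (a x * b y - b x * a y) * (c x * d y - d x * c y) =
      (a x * c x) * (b y * d y) - (a x * d x) * (b y * c y) -
        (b x * c x) * (a y * d y) + (b x * d x) * (a y * c y) := fun x y => by ring
  simp only [expand, sum_add_distrib, sum_sub_distrib, ← sum_mul_sum]
  ring

/-- A product of polynomials with positive coefficients up to their degrees has the same
property. -/
theorem Polynomial.coeff_mul_pos_of_pos_le_natDegree {p q : ℝ[X]}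
    (hp_pos : ∀ i ≤ p.natDegree, 0 < p.coeff i)
    (hq_pos : ∀ i ≤ q.natDegree, 0 < q.coeff i) {i : ℕ} (hi : i ≤ (p * q).natDegree) :
    0 < (p * q).coeff i := by
  have hi' : i ≤ p.natDegree + q.natDegree := hi.trans natDegree_mul_le
  rw [coeff_mul]
  refine sum_pos' (fun x _ => mul_nonneg (coeff_nonneg_of_pos_le_natDegree hp_pos _)
    (coeff_nonneg_of_pos_le_natDegree hq_pos _))
    ⟨(min i p.natDegree, i - min i p.natDegree), ?_, ?_⟩
  · rw [HasAntidiagonal.mem_antidiagonal]; omega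
  · exact mul_pos (hp_pos _ (by omega)) (hq_pos _ (by omega))

/-- The coefficient sequence of a product of positive log-concave polynomials is log-concave. -/
theorem Polynomial.coeff_mul_logConcave {p q : ℝ[X]}
    (hp_pos : ∀ i ≤ p.natDegree, 0 < p.coeff i)
    (hq_pos : ∀ i ≤ q.natDegree, 0 < q.coeff i)
    (hp_lc : ∀ i, 1 ≤ i → p.coeff (i - 1) * p.coeff (i + 1) ≤ (p.coeff i) ^ 2)
    (hq_lc : ∀ i, 1 ≤ i → q.coeff (i - 1) * q.coeff (i + 1) ≤ (q.coeff i) ^ 2) (n : ℕ) :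
    (p * q).coeff n * (p * q).coeff (n + 2) ≤ (p * q).coeff (n + 1) ^ 2 := by
  have hsum := sum_sum_minor_mul_minor (antidiagonal (n + 2))
    (fun x => p.coeff x.1) (fun x => (X * p).coeff x.1)
    (fun x => (X * q).coeff x.2) (fun x => q.coeff x.2)
  have hnonneg : 0 ≤ ∑ x ∈ antidiagonal (n + 2), ∑ y ∈ antidiagonal (n + 2),
      (p.coeff x.1 * (X * p).coeff y.1 - (X * p).coeff x.1 * p.coeff y.1) *
        ((X * q).coeff x.2 * q.coeff y.2 - q.coeff x.2 * (X * q).coeff y.2) := by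
    refine sum_nonneg fun x hx => sum_nonneg fun y hy => ?_
    rw [HasAntidiagonal.mem_antidiagonal] at hx hy
    rcases le_total x.1 y.1 with h | h
    · have hp := coeff_X_mul_mul_coeff_le_of_logConcave hp_pos hp_lc h
      have hq := coeff_X_mul_mul_coeff_le_of_logConcave hq_pos hq_lc (show y.2 ≤ x.2 by omega)
      exact mul_nonneg (by linarith) (by linarith)
    · have hp := coeff_X_mul_mul_coeff_le_of_logConcave hp_pos hp_lc h
      have hq := coeff_X_mul_mul_coeff_le_of_logConcave hq_pos hq_lc (show x.2 ≤ y.2 by omega)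
      exact mul_nonneg_of_nonpos_of_nonpos (by linarith) (by linarith)
  simp only [← coeff_mul] at hsum
  rw [show p * (X * q) = X * (p * q) by ring, show X * p * (X * q) = X * (X * (p * q)) by ring,
    mul_assoc X p q, coeff_X_mul, coeff_X_mul, coeff_X_mul] at hsum
  linarith

/-- **Products of positive log-concave polynomials are positive and log-concave.**
If `p` and `q` are real polynomials whose coefficients in degrees `0,…,deg`
are strictly positive and whose coefficient sequences are log-concave, then
the same holds for `p * q`. -/
theorem stmt_3 (p q : Polynomial ℝ)
    (hp_pos : ∀ i ≤ p.natDegree, 0 < p.coeff i)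
    (hq_pos : ∀ i ≤ q.natDegree, 0 < q.coeff i)
    (hp_lc : ∀ i, 1 ≤ i → p.coeff (i - 1) * p.coeff (i + 1) ≤ (p.coeff i) ^ 2)
    (hq_lc : ∀ i, 1 ≤ i → q.coeff (i - 1) * q.coeff (i + 1) ≤ (q.coeff i) ^ 2) :
    (∀ i ≤ (p * q).natDegree, 0 < (p * q).coeff i) ∧
      (∀ i, 1 ≤ i →
        (p * q).coeff (i - 1) * (p * q).coeff (i + 1) ≤ ((p * q).coeff i) ^ 2) := by
  refine ⟨fun i hi => Polynomial.coeff_mul_pos_of_pos_le_natDegree hp_pos hq_pos hi,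
    fun i hi => ?_⟩
  obtain ⟨n, rfl⟩ : ∃ n, i = n + 1 := ⟨i - 1, by omega⟩
  exact Polynomial.coeff_mul_logConcave hp_pos hq_pos hp_lc hq_lc n
end

section
/- Let a : Fin r → ℕ be the exponent vector of a monomial of degree e, and let h(i) be the number of monomials of degree i dividing a. Then h is unimodal: there exists an index m with 0 ≤ m ≤ e such that h(i) ≤ h(i+1) for all i < m and h(i) ≥ h(i+1) for all m ≤ i < e. (Pure O-sequences of type 1 are unimodal.) -/
/-- A function on `ℤ` that is symmetric about `e / 2` and weakly increasing up to `e / 2`. -/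
structure IsSymmUnimodal (f : ℤ → ℕ) (e : ℤ) : Prop where
  symm : ∀ i, f (e - i) = f i
  le_succ : ∀ i, 2 * i < e → f i ≤ f (i + 1)

namespace IsSymmUnimodal

variable {f : ℤ → ℕ} {e : ℤ}

theorem le_of_two_mul_le (hf : IsSymmUnimodal f e) {x y : ℤ} (hxy : x ≤ y) (hy : 2 * y ≤ e) :
    f x ≤ f y := by
  induction y, hxy using Int.leInduction with
  | base => exact le_rfl
  | succ y _ ih => exact (ih (by lia)).trans (hf.le_succ y (by lia))

theorem le_of_add_le (hf : IsSymmUnimodal f e) {x y : ℤ} (hxy : x ≤ y) (h : x + y ≤ e) :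
    f x ≤ f y := by
  rcases le_total (2 * y) e with hy | hy
  · exact hf.le_of_two_mul_le hxy hy
  · rw [← hf.symm y]
    exact hf.le_of_two_mul_le (by lia) (by lia)

/-- Convolution with the indicator of `{0, …, c}` preserves symmetric unimodality. -/
theorem sum_window (hf : IsSymmUnimodal f e) (c : ℕ) :
    IsSymmUnimodal (fun i => ∑ k ∈ Finset.range (c + 1), f (i - k)) (e + c) where
  symm i := by
    rw [← Finset.sum_flip]
    refine Finset.sum_congr rfl fun k hk => ?_
    have hk : k ≤ c := Nat.lt_succ_iff.mp (Finset.mem_range.mp hk)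
    rw [← hf.symm, Nat.cast_sub hk]
    congr 1
    ring
  le_succ i hi := by
    rw [Finset.sum_range_succ, Finset.sum_range_succ']
    have hshift : ∀ k : ℕ, i + 1 - ((k + 1 : ℕ) : ℤ) = i - k := fun k => by push_cast; ring
    simp only [hshift, Nat.cast_zero, sub_zero]
    gcongr
    exact hf.le_of_add_le (by lia) (by lia)

end IsSymmUnimodal

/-- The divisor count as an indicator sum, extended to integer degrees. -/
def intDivCount {r : ℕ} (a : Fin r → ℕ) (i : ℤ) : ℕ :=
  ∑ b : (j : Fin r) → Fin (a j + 1), if ∑ j, ((b j : ℕ) : ℤ) = i then 1 else 0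

theorem intDivCount_succ {r : ℕ} (a : Fin (r + 1) → ℕ) (i : ℤ) :
    intDivCount a i =
      ∑ k ∈ Finset.range (a 0 + 1), intDivCount (fun j => a j.succ) (i - k) := by
  unfold intDivCount
  rw [← (Fin.consEquiv fun j => Fin (a j + 1)).sum_comp, Fintype.sum_prod_type,
    Finset.sum_range]
  refine Finset.sum_congr rfl fun k _ => Finset.sum_congr rfl fun b _ => ?_
  simp only [Fin.consEquiv_apply, Fin.sum_univ_succ, Fin.cons_zero, Fin.cons_succ,
    eq_sub_iff_add_eq']

theorem isSymmUnimodal_intDivCount {r : ℕ} (a : Fin r → ℕ) :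
    IsSymmUnimodal (intDivCount a) (∑ j, (a j : ℤ)) := by
  induction r with
  | zero =>
    constructor
    · intro i
      simp [intDivCount, eq_comm]
    · intro i hi
      have hi : (0 : ℤ) ≠ i := by simp at hi; lia
      simp [intDivCount, hi]
  | succ r ih =>
    rw [Fin.sum_univ_succ, add_comm (a 0 : ℤ), funext (intDivCount_succ a)]
    exact (ih fun j => a j.succ).sum_window (a 0)

theorem divCount_eq_intDivCount {r : ℕ} (a : Fin r → ℕ) (i : ℕ) :
    divCount a i = intDivCount a i := by
  unfold divCount intDivCount
  rw [← Finset.card_filter, ← Set.ncard_coe_finset]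
  symm
  refine Set.ncard_congr (fun b _ j => (b j : ℕ)) ?_ ?_ ?_
  · intro b hb
    simp only [Finset.coe_filter, Finset.mem_univ, true_and, Set.mem_ofPred_eq] at hb
    exact ⟨fun j => Nat.lt_succ_iff.mp (b j).isLt, by exact_mod_cast hb⟩
  · intro b b' _ _ h
    funext j
    exact Fin.ext (congrFun h j)
  · rintro b ⟨hb, hsum⟩
    refine ⟨fun j => ⟨b j, Nat.lt_succ_iff.mpr (hb j)⟩, ?_, rfl⟩
    simp only [Finset.coe_filter, Finset.mem_univ, true_and, Set.mem_ofPred_eq]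
    exact_mod_cast hsum

/-- **Type 1 pure `O`-sequences are unimodal.**
If `a` is the exponent vector of a monomial of degree `e`, then its
divisor-counting function is unimodal: it is weakly increasing up to some
index `m ≤ e` and weakly decreasing from `m` up to `e`. -/
theorem stmt_5 {r : ℕ} (a : Fin r → ℕ) (e : ℕ) (he : e = ∑ j, a j) :
    ∃ m, m ≤ e ∧ (∀ i, i < m → divCount a i ≤ divCount a (i + 1)) ∧
      (∀ i, m ≤ i → i < e → divCount a (i + 1) ≤ divCount a i) := by
  have h := isSymmUnimodal_intDivCount a
  have he : ∑ j, (a j : ℤ) = e := by rw [he]; push_cast; rfl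
  rw [he] at h
  simp only [divCount_eq_intDivCount, Nat.cast_add, Nat.cast_one]
  refine ⟨e / 2, Nat.div_le_self e 2, fun i hi => h.le_succ i (by lia), fun i hi _ => ?_⟩
  rw [← h.symm i, ← h.symm (i + 1)]
  exact h.le_of_add_le (by lia) (by lia)
end

section
/- Let e ≥ 12 and let M ⊂ ℕ^3 consist of the four degree-e monomials x^4y^4z^{e-8}, x^{e-2}yz, xy^{e-2}z, xyz^{e-2}, i.e., the exponent vectors (4,4,e-8), (e-2,1,1), (1,e-2,1), (1,1,e-2). Let h(i) be the number of monomials of degree i dividing at least one element of M. Then h(e-4) = 27, h(e-3) = 22, h(e-2) = 18, h(e-1) = 12, h(e) = 4, and h(e-3)^2 < h(e-4)·h(e-2); in particular h is not log-concave. (This gives an infinite family of non-log-concave pure O-sequences of codimension 3 and type 4.) -/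
/-- `divCountSet M i` is the number of monomials of degree `i` (in `r`
variables) dividing at least one monomial whose exponent vector lies in `M`:
the `i`-th entry of the pure `O`-sequence generated by `M`. -/
noncomputable def divCountSet {r : ℕ} (M : Set (Fin r → ℕ)) (i : ℕ) : ℕ :=
  {b : Fin r → ℕ | (∑ j, b j = i) ∧ ∃ a ∈ M, ∀ j, b j ≤ a j}.ncard

/-- Labels for the divisors of degree `e - k`: a generator together with two coordinates of the
complementary exponent vector, the third being determined by the degree. -/
def codivisorLabels (k : ℕ) : Finset (Fin 4 × ℕ × ℕ) :=
  {t ∈ Finset.univ ×ˢ Finset.range 5 ×ˢ Finset.range 5 |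
    t.2.1 + t.2.2 ≤ k ∧ (t.1 = 0 ∨ t.2.1 ≤ 1 ∧ t.2.2 ≤ 1)}

/-- The divisor of degree `e - k` attached to a label. -/
def labelledDivisor (e k : ℕ) (t : Fin 4 × ℕ × ℕ) : Fin 3 → ℕ :=
  ![![4 - t.2.1, 4 - t.2.2, e - 8 - (k - t.2.1 - t.2.2)],
    ![e - 2 - (k - t.2.1 - t.2.2), 1 - t.2.1, 1 - t.2.2],
    ![1 - t.2.1, e - 2 - (k - t.2.1 - t.2.2), 1 - t.2.2],
    ![1 - t.2.1, 1 - t.2.2, e - 2 - (k - t.2.1 - t.2.2)]] t.1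

set_option maxHeartbeats 1000000 in
theorem labelledDivisor_injOn {e k : ℕ} (he : 12 ≤ e) (hk : k ≤ 4) :
    Set.InjOn (labelledDivisor e k) (codivisorLabels k) := by
  rintro ⟨i, p, q⟩ hs ⟨j, u, v⟩ ht h
  simp only [codivisorLabels, Finset.coe_filter, Finset.mem_product, Finset.mem_univ,
    Finset.mem_range, true_and, Set.mem_ofPred_eq] at hs ht
  have h0 := congrFun h 0
  have h1 := congrFun h 1
  have h2 := congrFun h 2
  clear h
  fin_cases i <;> fin_cases j <;> simp [labelledDivisor] at hs ht h0 h1 h2 ⊢ <;> omega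

theorem labelledDivisor_image {e k : ℕ} (he : 12 ≤ e) (hk : k ≤ 4) :
    Set.image (labelledDivisor e k) (codivisorLabels k) =
      {b : Fin 3 → ℕ | (∑ j, b j = e - k) ∧
        ∃ a ∈ ({![4, 4, e - 8], ![e - 2, 1, 1], ![1, e - 2, 1], ![1, 1, e - 2]} :
          Set (Fin 3 → ℕ)), ∀ j, b j ≤ a j} := by
  ext b
  simp only [codivisorLabels, Finset.coe_filter, Finset.mem_product, Finset.mem_univ,
    Finset.mem_range, true_and, Set.mem_image, Set.mem_ofPred_eq, Set.mem_insert_iff,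
    Set.mem_singleton_iff, exists_eq_or_imp, exists_eq_left, Fin.sum_univ_three,
    Fin.forall_fin_succ, Prod.exists]
  constructor
  · rintro ⟨i, p, q, h, rfl⟩
    fin_cases i <;> simp [labelledDivisor] at h ⊢ <;> omega
  · simp only [Matrix.cons_val, IsEmpty.forall_iff, and_true,
      Fin.succ_zero_eq_one, Fin.succ_one_eq_two]
    rintro ⟨hs, h | h | h | h⟩
    · refine ⟨0, 4 - b 0, 4 - b 1, by simp; omega, ?_⟩
      ext j; fin_cases j <;> simp [labelledDivisor] <;> omega
    · refine ⟨1, 1 - b 1, 1 - b 2, by simp; omega, ?_⟩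
      ext j; fin_cases j <;> simp [labelledDivisor] <;> omega
    · refine ⟨2, 1 - b 0, 1 - b 2, by simp; omega, ?_⟩
      ext j; fin_cases j <;> simp [labelledDivisor] <;> omega
    · refine ⟨3, 1 - b 0, 1 - b 1, by simp; omega, ?_⟩
      ext j; fin_cases j <;> simp [labelledDivisor] <;> omega

theorem divCountSet_sub_eq_card {e k : ℕ} (he : 12 ≤ e) (hk : k ≤ 4) :
    divCountSet {![4, 4, e - 8], ![e - 2, 1, 1], ![1, e - 2, 1], ![1, 1, e - 2]} (e - k) =
      (codivisorLabels k).card := by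
  rw [divCountSet, ← labelledDivisor_image he hk,
    (labelledDivisor_injOn he hk).ncard_image, Set.ncard_coe_finset]

/-- **A non-log-concave pure `O`-sequence of codimension 3 and type 4.**
For `e ≥ 12`, the pure `O`-sequence `h` generated by the four degree-`e`
monomials `x^4 y^4 z^(e-8)`, `x^(e-2) y z`, `x y^(e-2) z`, `x y z^(e-2)`
satisfies `h (e-4) = 27`, `h (e-3) = 22`, `h (e-2) = 18`, `h (e-1) = 12`,
`h e = 4`, and `h (e-3)^2 < h (e-4) * h (e-2)`; in particular `h` is not
log-concave. -/
theorem stmt_8 (e : ℕ) (he : 12 ≤ e)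
    (M : Set (Fin 3 → ℕ))
    (hM : M = {![4, 4, e - 8], ![e - 2, 1, 1], ![1, e - 2, 1], ![1, 1, e - 2]}) :
    divCountSet M (e - 4) = 27 ∧
      divCountSet M (e - 3) = 22 ∧
      divCountSet M (e - 2) = 18 ∧
      divCountSet M (e - 1) = 12 ∧
      divCountSet M e = 4 ∧
      (divCountSet M (e - 3)) ^ 2 < divCountSet M (e - 4) * divCountSet M (e - 2) := by
  subst hM
  have h4 := divCountSet_sub_eq_card he (k := 4) (by norm_num)
  have h3 := divCountSet_sub_eq_card he (k := 3) (by norm_num)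
  have h2 := divCountSet_sub_eq_card he (k := 2) (by norm_num)
  have h1 := divCountSet_sub_eq_card he (k := 1) (by norm_num)
  have h0 := divCountSet_sub_eq_card he (k := 0) (by norm_num)
  rw [Nat.sub_zero] at h0
  rw [h4, h3, h2, h1, h0]
  decide
end

section
/- Let e ≥ 42, and in four variables let F = x^{14}y^{14}z^{e-28} and G = x^{e-12}y^4z^4w^4, i.e., exponent vectors (14,14,e-28,0) and (e-12,4,4,4). Let h(i) be the number of monomials of degree i dividing F or G. Then h(e-14) = 245, h(e-13) = 230, h(e-12) = 216, and h(e-13)^2 < h(e-14)·h(e-12); in particular h is not log-concave. (This gives an infinite family of non-log-concave pure O-sequences of codimension 4 and type 2.) -/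
/-- The divisors of `x^14 y^14 z^(e-28)` of codegree `d`, counted by the codegrees in `x` and `y`. -/
theorem ncard_divisors_left (e d : ℕ) (he : 42 ≤ e) (hd : d ≤ 14) :
    {b : Fin 4 → ℕ | ∑ j, b j = e - d ∧ ∀ j, b j ≤ (![14, 14, e - 28, 0] : Fin 4 → ℕ) j}.ncard =
      ((Finset.range 15 ×ˢ Finset.range 15).filter fun p => p.1 + p.2 ≤ d).card := by
  rw [← Set.ncard_coe_finset]
  symm
  refine Set.ncard_congr (fun p _ => ![14 - p.1, 14 - p.2, e - 28 - (d - p.1 - p.2), 0]) ?_ ?_ ?_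
  · rintro ⟨a, b⟩ h
    simp [Fin.sum_univ_four, Fin.forall_fin_succ] at h ⊢
    omega
  · rintro ⟨a, b⟩ ⟨a', b'⟩ h h' heq
    simp at h h' heq ⊢
    omega
  · intro b hb
    simp [Fin.sum_univ_four, Fin.forall_fin_succ] at hb
    refine ⟨(14 - b 0, 14 - b 1), ?_, ?_⟩
    · simp
      omega
    · ext j
      fin_cases j <;> simp <;> omega

/-- The divisors of `x^(e-12) y^4 z^4 w^4` of codegree `d`, counted by their `y, z, w`-degrees. -/
theorem ncard_divisors_right (e d : ℕ) (he : 42 ≤ e) (hd : d ≤ 14) (hd' : 12 ≤ d) :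
    {b : Fin 4 → ℕ | ∑ j, b j = e - d ∧ ∀ j, b j ≤ (![e - 12, 4, 4, 4] : Fin 4 → ℕ) j}.ncard =
      125 := by
  have hcard : (Finset.range 5 ×ˢ Finset.range 5 ×ˢ Finset.range 5).card = 125 := by simp
  rw [← hcard, ← Set.ncard_coe_finset]
  symm
  refine Set.ncard_congr
    (fun p _ => ![e - d - (p.1 + p.2.1 + p.2.2), p.1, p.2.1, p.2.2]) ?_ ?_ ?_
  · rintro ⟨a, b, c⟩ h
    simp [Fin.sum_univ_four, Fin.forall_fin_succ] at h ⊢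
    omega
  · rintro ⟨a, b, c⟩ ⟨a', b', c'⟩ h h' heq
    simp at h h' heq ⊢
    omega
  · intro b hb
    simp [Fin.sum_univ_four, Fin.forall_fin_succ] at hb
    refine ⟨(b 1, b 2, b 3), ?_, ?_⟩
    · simp
      omega
    · ext j
      fin_cases j <;> simp
      omega

/-- In codegrees `12, 13, 14` the two monomials have no common divisor, so the counts add. -/
theorem divCountSet_pair (e d : ℕ) (he : 42 ≤ e) (hd : d ≤ 14) (hd' : 12 ≤ d) :
    divCountSet {![14, 14, e - 28, 0], ![e - 12, 4, 4, 4]} (e - d) =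
      ((Finset.range 15 ×ˢ Finset.range 15).filter fun p => p.1 + p.2 ≤ d).card + 125 := by
  have hfin (a : Fin 4 → ℕ) : {b : Fin 4 → ℕ | ∑ j, b j = e - d ∧ ∀ j, b j ≤ a j}.Finite :=
    (Set.finite_Iic a).subset fun b hb => hb.2
  rw [← ncard_divisors_left e d he hd, ← ncard_divisors_right e d he hd hd',
    ← Set.ncard_union_eq _ (hfin _) (hfin _), divCountSet]
  · congr 1
    ext b
    simp [and_or_left]
  · rw [Set.disjoint_left]
    intro b hb hb'
    simp [Fin.sum_univ_four, Fin.forall_fin_succ] at hb hb'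
    omega

/-- **A non-log-concave pure `O`-sequence of codimension 4 and type 2.**
For `e ≥ 42`, the pure `O`-sequence `h` generated by `F = x^14 y^14 z^(e-28)`
and `G = x^(e-12) y^4 z^4 w^4` satisfies `h (e-14) = 245`, `h (e-13) = 230`,
`h (e-12) = 216`, and `h (e-13)^2 < h (e-14) * h (e-12)`; in particular `h`
is not log-concave. -/
theorem stmt_9 (e : ℕ) (he : 42 ≤ e)
    (M : Set (Fin 4 → ℕ))
    (hM : M = {![14, 14, e - 28, 0], ![e - 12, 4, 4, 4]}) :
    divCountSet M (e - 14) = 245 ∧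
      divCountSet M (e - 13) = 230 ∧
      divCountSet M (e - 12) = 216 ∧
      (divCountSet M (e - 13)) ^ 2 < divCountSet M (e - 14) * divCountSet M (e - 12) := by
  subst hM
  rw [divCountSet_pair e 14 he (by norm_num) (by norm_num),
    divCountSet_pair e 13 he (by norm_num) (by norm_num),
    divCountSet_pair e 12 he (by norm_num) (by norm_num)]
  decide +kernel
end

section
/- Let r ≥ 4 and e ≥ 2r+16, and consider the monomial in r variables with exponent vector a given by a(1) = e-r-8, a(2) = a(3) = a(4) = 4, and a(j) = 1 for 5 ≤ j ≤ r. For every degree d with r+8 ≤ d ≤ e-r-8, the number of monomial divisors of a of degree d equals 125·2^{r-4}. -/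
/-- In a degree between the degree of the tail of `a` and its first exponent, a divisor of `a` is
determined by its tail, which may be any divisor of the tail of `a`. -/
theorem divCount_eq_prod_tail {n : ℕ} (a : Fin (n + 1) → ℕ) (d : ℕ)
    (hd₁ : ∑ j, Fin.tail a j ≤ d) (hd₂ : d ≤ a 0) :
    divCount a d = ∏ j, (Fin.tail a j + 1) := by
  have hinj : Set.InjOn Fin.tail
      {b : Fin (n + 1) → ℕ | (∀ j, b j ≤ a j) ∧ ∑ j, b j = d} := by
    rintro b ⟨-, hb⟩ c ⟨-, hc⟩ h
    have htail : ∀ j : Fin n, b j.succ = c j.succ := congrFun h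
    rw [Fin.sum_univ_succ] at hb hc
    simp only [htail] at hb
    funext j
    refine Fin.cases ?_ htail j
    omega
  have himage : Fin.tail '' {b : Fin (n + 1) → ℕ | (∀ j, b j ≤ a j) ∧ ∑ j, b j = d} =
      ↑(Finset.Iic (Fin.tail a)) := by
    ext c
    simp only [Set.mem_image, Set.mem_ofPred_eq, Finset.coe_Iic, Set.mem_Iic]
    constructor
    · rintro ⟨b, ⟨hb, -⟩, rfl⟩ j
      exact hb j.succ
    · intro hc
      have hsum : ∑ j, c j ≤ d := (Finset.sum_le_sum fun j _ => hc j).trans hd₁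
      refine ⟨Fin.cons (d - ∑ j, c j) c, ⟨fun j => ?_, ?_⟩, Fin.tail_cons _ _⟩
      · refine Fin.cases ?_ (fun j => ?_) j
        · simpa using by omega
        · exact hc j
      · rw [Fin.sum_cons]
        omega
  rw [divCount, ← hinj.ncard_image, himage, Set.ncard_coe_finset, Pi.card_Iic]
  simp

/-- **Middle divisor counts of `x₁^(e-r-8) x₂^4 x₃^4 x₄^4 x₅ ⋯ x_r`.**
For `r ≥ 4` and `e ≥ 2r + 16`, the monomial in `r` variables whose first
exponent is `e - r - 8`, whose next three exponents are `4`, and whose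
remaining exponents are `1`, has exactly `125 * 2^(r-4)` monomial divisors in
every degree `d` with `r + 8 ≤ d ≤ e - r - 8`. -/
theorem stmt_13 (r e : ℕ) (hr : 4 ≤ r) (he : 2 * r + 16 ≤ e)
    (a : Fin r → ℕ)
    (ha : a = fun j : Fin r => if (j : ℕ) = 0 then e - r - 8 else if (j : ℕ) ≤ 3 then 4 else 1)
    (d : ℕ) (hd1 : r + 8 ≤ d) (hd2 : d ≤ e - r - 8) :
    divCount a d = 125 * 2 ^ (r - 4) := by
  obtain ⟨m, rfl⟩ := Nat.exists_eq_add_of_le' hr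
  subst ha
  have hlast (x : ℕ) : ¬ x + 1 + 1 + 1 < 3 := by omega
  rw [divCount_eq_prod_tail (n := m + 3)]
  · simp [Fin.tail, Fin.prod_univ_succ, hlast]
    ring
  · simp [Fin.tail, Fin.sum_univ_succ, hlast]
    omega
  · simpa using hd2
end

section
/- Let r ≥ 5 and e ≥ 3r+30. In r variables, let F have exponent vector (r+10, r+10, e-2r-20, 0, …, 0) and let G have exponent vector (e-r-8, 4, 4, 4, 1, …, 1) (exponent 1 in each of the variables x_5, …, x_r). Let h(i) be the number of monomials of degree i dividing F or G. Then h(e-r-10) = C(r+12,2) + 125·2^{r-4}, h(e-r-9) = C(r+11,2) + 125·2^{r-4}, h(e-r-8) = C(r+10,2) + 125·2^{r-4}, and h(e-r-9)^2 < h(e-r-10)·h(e-r-8); in particular h is not log-concave. (This gives an infinite family of non-log-concave pure O-sequences of codimension r and type 2, for every r ≥ 5.) -/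
/-- A divisor of `A` of degree `d` is determined by its exponents off the first variable, which are
arbitrary once `d ≤ A 0` and `d` is at least the degree of `A` off the first variable. -/
theorem ncard_divisors_of_le_apply_zero {n : ℕ} (A : Fin (n + 1) → ℕ) (d : ℕ) (hd : d ≤ A 0)
    (hA : ∑ j : Fin n, A j.succ ≤ d) :
    {b : Fin (n + 1) → ℕ | (∑ j, b j = d) ∧ ∀ j, b j ≤ A j}.ncard =
      ∏ j : Fin n, (A j.succ + 1) := by
  have himage : {b : Fin (n + 1) → ℕ | (∑ j, b j = d) ∧ ∀ j, b j ≤ A j} =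
      (fun c : Fin n → ℕ => (Fin.cons (d - ∑ j, c j) c : Fin (n + 1) → ℕ)) ''
        (Finset.Iic (Fin.tail A) : Finset (Fin n → ℕ)) := by
    ext b
    simp only [Set.mem_ofPred_eq, Set.mem_image, Finset.mem_coe, Finset.mem_Iic]
    constructor
    · rintro ⟨hsum, hb⟩
      refine ⟨Fin.tail b, fun j => hb j.succ, ?_⟩
      rw [Fin.sum_univ_succ] at hsum
      have hzero : d - ∑ j, Fin.tail b j = b 0 := by
        simp only [Fin.tail]
        omega
      simp only [hzero, Fin.cons_self_tail]
    · rintro ⟨c, hc, rfl⟩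
      have hle : ∑ j, c j ≤ d := (Finset.sum_le_sum fun j _ => hc j).trans hA
      refine ⟨?_, fun j => ?_⟩
      · rw [Fin.sum_univ_succ]
        simp only [Fin.cons_zero, Fin.cons_succ]
        omega
      · refine Fin.cases ?_ (fun i => ?_) j
        · simp only [Fin.cons_zero]
          omega
        · simp only [Fin.cons_succ]
          exact hc i
  have hinj : Function.Injective
      (fun c : Fin n → ℕ => (Fin.cons (d - ∑ j, c j) c : Fin (n + 1) → ℕ)) :=
    fun c c' h => (Fin.cons_injective2 h).2
  rw [himage, Set.ncard_image_of_injective _ hinj, Set.ncard_coe_finset, Pi.card_Iic]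
  simp [Fin.tail]

/-- If `A` involves only the first three variables, each with exponent at least `t`, then its
divisors of codegree `t` correspond to all triples of natural numbers with sum `t`. -/
theorem ncard_divisors_three_variables {m : ℕ} (A : Fin (m + 3) → ℕ) (d t : ℕ)
    (h0 : t ≤ A 0) (h1 : t ≤ A 1) (h2 : t ≤ A 2) (hA : ∀ j : Fin m, A j.succ.succ.succ = 0)
    (hd : d + t = A 0 + A 1 + A 2) :
    {b : Fin (m + 3) → ℕ | (∑ j, b j = d) ∧ ∀ j, b j ≤ A j}.ncard = (t + 2).choose 2 := by
  let f : (Σ _ : ℕ, ℕ) → Fin (m + 3) → ℕ := fun p =>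
    Fin.cons (A 0 - p.2) (Fin.cons (A 1 - (p.1 - p.2)) (Fin.cons (A 2 - (t - p.1)) fun _ => 0))
  have hf0 : ∀ p, f p 0 = A 0 - p.2 := fun _ => rfl
  have hf1 : ∀ p, f p 1 = A 1 - (p.1 - p.2) := fun _ => rfl
  have hf2 : ∀ p, f p 2 = A 2 - (t - p.1) := fun _ => rfl
  have hfs : ∀ p (j : Fin m), f p j.succ.succ.succ = 0 := fun _ _ => rfl
  have hsum : ∀ b : Fin (m + 3) → ℕ,
      ∑ j, b j = b 0 + (b 1 + (b 2 + ∑ j : Fin m, b j.succ.succ.succ)) := fun b => by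
    rw [Fin.sum_univ_succ, Fin.sum_univ_succ, Fin.sum_univ_succ]
    rfl
  have hforall : ∀ P : Fin (m + 3) → Prop,
      P 0 → P 1 → P 2 → (∀ j : Fin m, P j.succ.succ.succ) → ∀ j, P j :=
    fun P p0 p1 p2 ps => Fin.cases p0 (Fin.cases p1 (Fin.cases p2 ps))
  have himage : {b : Fin (m + 3) → ℕ | (∑ j, b j = d) ∧ ∀ j, b j ≤ A j} =
      f '' ((Finset.range (t + 1)).sigma fun i => Finset.range (i + 1) :
        Finset (Σ _ : ℕ, ℕ)) := by
    ext b
    simp only [Set.mem_ofPred_eq, Set.mem_image, Finset.mem_coe, Finset.mem_sigma,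
      Finset.mem_range]
    constructor
    · rintro ⟨hb, hle⟩
      have hs : ∀ j : Fin m, b j.succ.succ.succ = 0 := fun j =>
        Nat.le_zero.mp ((hle _).trans (hA j).le)
      rw [hsum, Finset.sum_eq_zero fun j _ => hs j] at hb
      have hb0 := hle 0
      have hb1 := hle 1
      have hb2 := hle 2
      refine ⟨⟨(A 0 - b 0) + (A 1 - b 1), A 0 - b 0⟩, by constructor <;> simp only <;> omega, ?_⟩
      funext j
      refine hforall (fun j => f _ j = b j) ?_ ?_ ?_ (fun j => ?_) j
      · simp only [hf0]; omega
      · simp only [hf1]; omega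
      · simp only [hf2]; omega
      · rw [hfs, hs]
    · rintro ⟨p, ⟨hp, hq⟩, rfl⟩
      refine ⟨?_, hforall _ ?_ ?_ ?_ fun j => ?_⟩
      · rw [hsum, Finset.sum_eq_zero fun j _ => hfs p j, hf0, hf1, hf2]
        omega
      · rw [hf0]; omega
      · rw [hf1]; omega
      · rw [hf2]; omega
      · rw [hfs]; exact Nat.zero_le _
  have hinj : Set.InjOn f ((Finset.range (t + 1)).sigma fun i => Finset.range (i + 1) :
      Finset (Σ _ : ℕ, ℕ)) := by
    rintro ⟨i, j⟩ hp ⟨i', j'⟩ hq h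
    simp only [Finset.mem_coe, Finset.mem_sigma, Finset.mem_range] at hp hq
    have e0 := congrFun h 0
    have e2 := congrFun h 2
    simp only [hf0, hf2] at e0 e2
    obtain rfl : i = i' := by omega
    obtain rfl : j = j' := by omega
    rfl
  rw [himage, hinj.ncard_image, Set.ncard_coe_finset, Finset.card_sigma]
  simp only [Finset.card_range]
  have hgauss := Finset.sum_range_succ' (fun i => i) (t + 1)
  rw [← Nat.add_zero (∑ i ∈ Finset.range (t + 1), (i + 1)), ← hgauss, Finset.sum_range_id, Nat.choose_two_right]

/-- If no divisor of degree `d` is common to `A` and `B`, the `d`-th entry of the pure `O`-sequence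
generated by `A` and `B` is the sum of the two individual counts. -/
theorem divCountSet_pair_eq_add {r : ℕ} (A B : Fin r → ℕ) (d : ℕ)
    (h : ∑ j, min (A j) (B j) < d) :
    divCountSet {A, B} d = {b : Fin r → ℕ | (∑ j, b j = d) ∧ ∀ j, b j ≤ A j}.ncard +
      {b : Fin r → ℕ | (∑ j, b j = d) ∧ ∀ j, b j ≤ B j}.ncard := by
  have hfin : ∀ C : Fin r → ℕ, {b : Fin r → ℕ | (∑ j, b j = d) ∧ ∀ j, b j ≤ C j}.Finite :=
    fun C => (Set.finite_Iic C).subset fun b hb => hb.2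
  rw [divCountSet, ← Set.ncard_union_eq ?_ (hfin A) (hfin B)]
  · congr 1
    ext b
    simp only [Set.mem_insert_iff, Set.mem_singleton_iff, exists_eq_or_imp, exists_eq_left,
      Set.mem_ofPred_eq, Set.mem_union]
    tauto
  · rw [Set.disjoint_left]
    rintro b ⟨hb, hA⟩ ⟨-, hB⟩
    have := Finset.sum_le_sum fun j (_ : j ∈ Finset.univ) => le_min (hA j) (hB j)
    omega

theorem choose_two_lt_two_pow (m : ℕ) : (m + 16).choose 2 < 125 * 2 ^ (m + 1) := by
  induction m with
  | zero => decide
  | succ m ih =>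
    have h : (m + 1 + 16).choose 2 = (m + 16).choose 1 + (m + 16).choose 2 :=
      Nat.choose_succ_succ' (m + 16) 1
    rw [Nat.choose_one_right] at h
    have hm : m + 1 < 2 ^ (m + 1) := Nat.lt_two_pow_self
    rw [pow_succ]
    omega

theorem choose_two_add_sq_lt {n N : ℕ} (h : (n + 1).choose 2 < N) :
    ((n + 1).choose 2 + N) ^ 2 < ((n + 2).choose 2 + N) * (n.choose 2 + N) := by
  have h1 : (n + 1).choose 2 = n + n.choose 2 := by
    rw [Nat.choose_succ_succ' n 1, Nat.choose_one_right]
  have h2 : (n + 2).choose 2 = n + 1 + (n + 1).choose 2 := by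
    rw [Nat.choose_succ_succ' (n + 1) 1, Nat.choose_one_right]
  have h3 : 2 * n.choose 2 + n = n ^ 2 := by
    clear h h1 h2
    induction n with
    | zero => rfl
    | succ k ih =>
      rw [Nat.choose_succ_succ' k 1, Nat.choose_one_right]
      linarith
  rw [h2, h1]
  rw [h1] at h
  nlinarith

/-- **Non-log-concave pure `O`-sequences of codimension `r ≥ 5` and type 2.**
For `r ≥ 5` and `e ≥ 3r + 30`, let `F = x₁^(r+10) x₂^(r+10) x₃^(e-2r-20)` and
`G = x₁^(e-r-8) x₂^4 x₃^4 x₄^4 x₅ ⋯ x_r`. The pure `O`-sequence `h` generated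
by `F` and `G` satisfies `h (e-r-10) = C(r+12,2) + 125·2^(r-4)`,
`h (e-r-9) = C(r+11,2) + 125·2^(r-4)`, `h (e-r-8) = C(r+10,2) + 125·2^(r-4)`,
and `h (e-r-9)^2 < h (e-r-10) * h (e-r-8)`; in particular `h` is not
log-concave. -/
theorem stmt_14 (r e : ℕ) (hr : 5 ≤ r) (he : 3 * r + 30 ≤ e)
    (F G : Fin r → ℕ)
    (hF : F = fun j : Fin r =>
      if (j : ℕ) = 0 then r + 10 else if (j : ℕ) = 1 then r + 10
        else if (j : ℕ) = 2 then e - 2 * r - 20 else 0)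
    (hG : G = fun j : Fin r =>
      if (j : ℕ) = 0 then e - r - 8 else if (j : ℕ) ≤ 3 then 4 else 1) :
    divCountSet {F, G} (e - r - 10) = Nat.choose (r + 12) 2 + 125 * 2 ^ (r - 4) ∧
      divCountSet {F, G} (e - r - 9) = Nat.choose (r + 11) 2 + 125 * 2 ^ (r - 4) ∧
      divCountSet {F, G} (e - r - 8) = Nat.choose (r + 10) 2 + 125 * 2 ^ (r - 4) ∧
      (divCountSet {F, G} (e - r - 9)) ^ 2 <
        divCountSet {F, G} (e - r - 10) * divCountSet {F, G} (e - r - 8) := by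
  obtain ⟨m, rfl⟩ := Nat.exists_eq_add_of_le' hr
  have htwo : 2 % (m + 5) = 2 := Nat.mod_eq_of_lt (by omega)
  have hvoid : ∀ x : ℕ, ¬ x + 1 + 1 + 1 + 1 < 3 := fun x => by omega
  have hcount : ∀ t d, t ≤ m + 15 → m + 13 ≤ t → d + t = e →
      divCountSet {F, G} d = (t + 2).choose 2 + 125 * 2 ^ (m + 1) := by
    intro t d ht ht' hd
    rw [divCountSet_pair_eq_add]
    · congr 1
      · refine ncard_divisors_three_variables (m := m + 2) F d t ?_ ?_ ?_ (fun j => ?_) ?_ <;>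
          subst hF <;> simp [htwo] <;> omega
      · rw [ncard_divisors_of_le_apply_zero (n := m + 4) G d]
        · subst hG
          simp [Fin.prod_univ_succ, hvoid]
          ring
        · subst hG
          simp
          omega
        · subst hG
          simp [Fin.sum_univ_succ, hvoid]
          omega
    · subst hF hG
      simp [Fin.sum_univ_succ]
      omega
  have h0 := hcount (m + 15) (e - (m + 5) - 10) (by omega) (by omega) (by omega)
  have h1 := hcount (m + 14) (e - (m + 5) - 9) (by omega) (by omega) (by omega)
  have h2 := hcount (m + 13) (e - (m + 5) - 8) (by omega) (by omega) (by omega)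
  refine ⟨h0, h1, h2, ?_⟩
  rw [h0, h1, h2]
  exact choose_two_add_sq_lt (n := m + 15) (choose_two_lt_two_pow m)
end
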